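/- Let M be the 27 × 27 integer matrix obtained by stacking vertically the three Kronecker products r ⊗ I₃ ⊗ I₃, I₃ ⊗ r ⊗ I₃, and I₃ ⊗ I₃ ⊗ r, where I₃ is the 3 × 3 identity matrix and r = (1, 1, 1). Let x_p = (0,0,0,0,53,0,0,0,0,0,52,2,52,2652,104,2,104,2,0,0,0,0,106,2,0,2,0) ∈ ℤ²⁷. Then x_p is the unique vector x ∈ ℤ²⁷ with all coordinates nonnegative satisfying M x = M x_p and x₂₇ = 0; i.e., the set of such vectors has exactly 1 element. -/

import Mathlib

/-!
Read `x ∈ ℤ²⁷` as a `3 × 3 × 3` array. Then `M x` lists the sums of `x` along the 27 axis-parallel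
lines of the array. An array with prescribed line sums is determined by its entries off the three
coordinate planes through a chosen point, for each entry on these planes can be recovered by
completing a line. Take the centre as the chosen point: the entries off the planes are the eight
corners. Seven of them lie on lines along which `x_p` sums to `0`, so nonnegativity forces `x` to
vanish there; the eighth is `x₂₇`.
-/

open Matrix Kronecker

/-- The 1 × 3 all-ones row vector `r = (1, 1, 1)`. -/
def rOnes : Matrix (Fin 1) (Fin 3) ℤ := Matrix.of fun _ _ => 1

/-- Lexicographic identification of index triples `(i₁, i₂, i₃)` with `Fin 27`
(first coordinate most significant), matching the lexicographic ordering of the triples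
`(i₁, i₂, i₃) ∈ {1, 2, 3}³` used to index the 27 coordinates. -/
def colEquiv : (Fin 3 × Fin 3) × Fin 3 ≃ Fin 27 :=
  (Equiv.prodCongr finProdFinEquiv (Equiv.refl (Fin 3))).trans finProdFinEquiv

def rowEquiv1 : (Fin 1 × Fin 3) × Fin 3 ≃ Fin 9 :=
  (Equiv.prodCongr finProdFinEquiv (Equiv.refl (Fin 3))).trans finProdFinEquiv

def rowEquiv2 : (Fin 3 × Fin 1) × Fin 3 ≃ Fin 9 :=
  (Equiv.prodCongr finProdFinEquiv (Equiv.refl (Fin 3))).trans finProdFinEquiv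

def rowEquiv3 : (Fin 3 × Fin 3) × Fin 1 ≃ Fin 9 :=
  (Equiv.prodCongr finProdFinEquiv (Equiv.refl (Fin 1))).trans finProdFinEquiv

/-- The 27 × 27 matrix obtained by stacking vertically the three Kronecker products
`r ⊗ I₃ ⊗ I₃`, `I₃ ⊗ r ⊗ I₃` and `I₃ ⊗ I₃ ⊗ r`, where `I₃` is the 3 × 3 identity matrix and
`r = (1, 1, 1)` is the 1 × 3 all-ones row, with columns indexed lexicographically by triples. -/
def M : Matrix (Fin 27) (Fin 27) ℤ :=
  Matrix.reindex
    ((rowEquiv1.sumCongr (rowEquiv2.sumCongr rowEquiv3)).trans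
      (((Equiv.refl (Fin 9)).sumCongr finSumFinEquiv).trans finSumFinEquiv))
    colEquiv
    (Matrix.fromRows
      (rOnes ⊗ₖ (1 : Matrix (Fin 3) (Fin 3) ℤ) ⊗ₖ (1 : Matrix (Fin 3) (Fin 3) ℤ))
      (Matrix.fromRows
        ((1 : Matrix (Fin 3) (Fin 3) ℤ) ⊗ₖ rOnes ⊗ₖ (1 : Matrix (Fin 3) (Fin 3) ℤ))
        ((1 : Matrix (Fin 3) (Fin 3) ℤ) ⊗ₖ (1 : Matrix (Fin 3) (Fin 3) ℤ) ⊗ₖ rOnes)))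

/-- The particular solution of block 211 (coordinates indexed lexicographically by triples,
coordinate 27 corresponding to (3,3,3)). -/
def xp : Fin 27 → ℤ := ![0,0,0,0,53,0,0,0,0,0,52,2,52,2652,104,2,104,2,0,0,0,0,106,2,0,2,0]

section Kronecker

variable {l m n R : Type*} [Fintype m] [Fintype n] [DecidableEq n] [NonAssocSemiring R]

lemma kronecker_one_mulVec_apply (A : Matrix l m R) (v : m × n → R) (p : l × n) :
    ((A ⊗ₖ (1 : Matrix n n R)) *ᵥ v) p = (A *ᵥ fun j ↦ v (j, p.2)) p.1 := by
  simp [mulVec, dotProduct, Fintype.sum_prod_type, one_apply]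

lemma one_kronecker_mulVec_apply (A : Matrix l m R) (v : n × m → R) (p : n × l) :
    (((1 : Matrix n n R) ⊗ₖ A) *ᵥ v) p = (A *ᵥ fun j ↦ v (p.1, j)) p.2 := by
  simp [mulVec, dotProduct, Fintype.sum_prod_type_right, one_apply]

end Kronecker

section LineSums

variable {ι κ μ G : Type*} [Fintype ι] [Fintype κ] [Fintype μ]

lemma eq_of_sum_eq_of_eq_off [AddCancelCommMonoid G] {f g : ι → G}
    (hsum : ∑ i, f i = ∑ i, g i) (i₀ : ι) (hoff : ∀ i, i ≠ i₀ → f i = g i) : f = g := by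
  classical
  have hcompl : ∑ i ∈ {i₀}ᶜ, f i = ∑ i ∈ {i₀}ᶜ, g i :=
    Finset.sum_congr rfl fun i hi ↦ hoff i (by simpa using hi)
  have hi₀ : f i₀ = g i₀ := by
    rw [Fintype.sum_eq_add_sum_compl i₀, Fintype.sum_eq_add_sum_compl i₀ g, hcompl] at hsum
    exact add_right_cancel hsum
  funext i
  obtain rfl | hi := eq_or_ne i i₀
  exacts [hi₀, hoff i hi]

/-- Two three-dimensional arrays have the same line sums if they have the same sum along every
line parallel to one of the three axes. This is the array form of `M x = M y`. -/
structure SameLineSums [AddCommMonoid G] (A B : ι → κ → μ → G) : Prop where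
  sum_fst : ∀ j k, ∑ i, A i j k = ∑ i, B i j k
  sum_snd : ∀ i k, ∑ j, A i j k = ∑ j, B i j k
  sum_thd : ∀ i j, ∑ k, A i j k = ∑ k, B i j k

theorem SameLineSums.eq_of_eq_off_planes [AddCancelCommMonoid G] {A B : ι → κ → μ → G}
    (h : SameLineSums A B) (i₀ : ι) (j₀ : κ) (k₀ : μ)
    (hoff : ∀ i j k, i ≠ i₀ → j ≠ j₀ → k ≠ k₀ → A i j k = B i j k) : A = B := by
  have hlines : ∀ i j, i ≠ i₀ → j ≠ j₀ → A i j = B i j := fun i j hi hj ↦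
    eq_of_sum_eq_of_eq_off (h.sum_thd i j) k₀ fun k ↦ hoff i j k hi hj
  have hlayers : ∀ i, i ≠ i₀ → A i = B i := fun i hi ↦ funext₂ fun j k ↦
    congrFun (eq_of_sum_eq_of_eq_off (h.sum_snd i k) j₀
      fun j hj ↦ congrFun (hlines i j hi hj) k) j
  exact funext₃ fun i j k ↦
    congrFun (eq_of_sum_eq_of_eq_off (h.sum_fst j k) i₀
      fun i hi ↦ congrFun₂ (hlayers i hi) j k) i

lemma SameLineSums.eq_zero_of_sum_snd_eq_zero [AddCommMonoid G] [PartialOrder G]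
    [IsOrderedAddMonoid G] {A B : ι → κ → μ → G} (h : SameLineSums A B) {i : ι} {k : μ}
    (hA : ∀ j, 0 ≤ A i j k) (hB : ∑ j, B i j k = 0) (j : κ) : A i j k = 0 :=
  congrFun ((Fintype.sum_eq_zero_iff_of_nonneg hA).mp ((h.sum_snd i k).trans hB)) j

lemma SameLineSums.eq_zero_of_sum_thd_eq_zero [AddCommMonoid G] [PartialOrder G]
    [IsOrderedAddMonoid G] {A B : ι → κ → μ → G} (h : SameLineSums A B) {i : ι} {j : κ}
    (hA : ∀ k, 0 ≤ A i j k) (hB : ∑ k, B i j k = 0) (k : μ) : A i j k = 0 :=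
  congrFun ((Fintype.sum_eq_zero_iff_of_nonneg hA).mp ((h.sum_thd i j).trans hB)) k

end LineSums

/-- The `3 × 3 × 3` array whose entries, in lexicographic order, are the coordinates of `x`.
Its indices start at `0`, so `toArray x i j k` is the paper's entry `(i + 1, j + 1, k + 1)`. -/
def toArray (x : Fin 27 → ℤ) (i j k : Fin 3) : ℤ :=
  x (colEquiv ((i, j), k))

lemma toArray_injective : Function.Injective toArray := fun _ _ h ↦
  colEquiv.surjective.injective_comp_right <| funext fun ((i, j), k) ↦ congrFun₃ h i j k

lemma rOnes_mulVec_apply (v : Fin 3 → ℤ) (u : Fin 1) : (rOnes *ᵥ v) u = ∑ i, v i := by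
  simp [rOnes, mulVec, dotProduct]

theorem M_mulVec_eq_iff_sameLineSums {x y : Fin 27 → ℤ} :
    M *ᵥ x = M *ᵥ y ↔ SameLineSums (toArray x) (toArray y) := by
  rw [M, reindex_apply, submatrix_mulVec_equiv, submatrix_mulVec_equiv,
    (Equiv.surjective _).injective_comp_right.eq_iff]
  simp only [Equiv.symm_symm, funext_iff, Sum.forall, Prod.forall, fromRows_mulVec, Sum.elim_inl,
    Sum.elim_inr, one_kronecker_one, kronecker_one_mulVec_apply, one_kronecker_mulVec_apply,
    rOnes_mulVec_apply, Function.comp_apply, Fin.forall_fin_one]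
  exact ⟨fun ⟨h₁, h₂, h₃⟩ ↦ ⟨h₁, h₂, h₃⟩, fun ⟨h₁, h₂, h₃⟩ ↦ ⟨h₁, h₂, h₃⟩⟩

lemma toArray_xp_eq_zero_of_corner {i j k : Fin 3} (hi : i ≠ 1) (hj : j ≠ 1) (hk : k ≠ 1) :
    toArray xp i j k = 0 := by
  decide +revert

lemma toArray_eq_zero_of_corner {x : Fin 27 → ℤ} (hx : ∀ i, 0 ≤ x i)
    (h : SameLineSums (toArray x) (toArray xp)) (h26 : x 26 = 0) {i j k : Fin 3}
    (hi : i ≠ 1) (hj : j ≠ 1) (hk : k ≠ 1) : toArray x i j k = 0 := by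
  have zero_or_two (a : Fin 3) (ha : a ≠ 1) : a = 0 ∨ a = 2 := by lia
  obtain rfl | rfl := zero_or_two i hi
  · exact h.eq_zero_of_sum_thd_eq_zero (fun _ ↦ hx _) (by decide +revert) k
  obtain rfl | rfl := zero_or_two j hj
  · exact h.eq_zero_of_sum_thd_eq_zero (fun _ ↦ hx _) (by decide) k
  obtain rfl | rfl := zero_or_two k hk
  · exact h.eq_zero_of_sum_snd_eq_zero (fun _ ↦ hx _) (by decide) 2
  · exact h26

/-- `x_p` is the unique nonnegative integer vector `x` with
`M x = M x_p` and `x₂₇ = 0` (block 211); i.e., this solution set is `{x_p}`, and in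
particular it has exactly 1 element. -/
theorem block211_unique_solution :
    {x : Fin 27 → ℤ | (∀ i, 0 ≤ x i) ∧ M.mulVec x = M.mulVec xp ∧ x 26 = 0} = {xp} ∧
    {x : Fin 27 → ℤ | (∀ i, 0 ≤ x i) ∧ M.mulVec x = M.mulVec xp ∧ x 26 = 0}.ncard = 1 := by
  have hset : {x : Fin 27 → ℤ | (∀ i, 0 ≤ x i) ∧ M.mulVec x = M.mulVec xp ∧ x 26 = 0} = {xp} := by
    refine Set.eq_singleton_iff_unique_mem.mpr ⟨⟨by decide, rfl, rfl⟩, ?_⟩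
    rintro x ⟨hx, hM, h26⟩
    have hlines : SameLineSums (toArray x) (toArray xp) := M_mulVec_eq_iff_sameLineSums.mp hM
    refine toArray_injective (hlines.eq_of_eq_off_planes 1 1 1 fun i j k hi hj hk ↦ ?_)
    rw [toArray_eq_zero_of_corner hx hlines h26 hi hj hk, toArray_xp_eq_zero_of_corner hi hj hk]
  exact ⟨hset, by rw [hset, Set.ncard_singleton]⟩
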